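/- Let p ≥ 2, c ≥ 1, and N be integers, and let d₁, …, d_c be natural numbers with each dᵢ ≥ p. For each i let rᵢ ∈ {0, …, p − 1} be the residue of dᵢ modulo p, and set δ := ((p + 1)/p)·Σᵢ (dᵢ − rᵢ) − N − 1 (an integer, since p divides each dᵢ − rᵢ). Suppose p·(N + 2p − 2) + c·(p² − 1) ≤ (p + 1)·Σᵢ dᵢ and Σᵢ dᵢ ≤ N + p − 2. Then: (i) 2c ≤ N − c + 3; (ii) c ≤ N − c − 1; (iii) 2c ≤ (N − 2c − 1)·(N − 2c − 2) and 2c ≤ (N − 2c − 1)·(N − 2c); (iv) δ ≥ 2p − 3 and ⌊(δ + 3)/2⌋ ≥ p; in particular δ > 0 when p ≥ 2. -/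

import Mathlib

/-!
Playing the lower bound on the total degree against the upper bound cancels the terms
`p N` and leaves `p² - p + 2 + c (p² - 1) ≤ N`, whence `3c + 4 ≤ N` because `p ≥ 2`; this makes every
dimension condition slack. The residues modulo `p` cost at most `c (p - 1)` in total, and the
correction `c (p² - 1) = (p + 1) · c (p - 1)` in the lower bound is exactly what absorbs this loss,
so that `p (δ + N + 1) ≥ p (N + 2p - 2)`.
-/

theorem sum_emod_le_card_mul {ι : Type*} (s : Finset ι) (d : ι → ℤ) {p : ℤ} (hp : 0 < p) :
    ∑ i ∈ s, d i % p ≤ s.card * (p - 1) := by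
  simpa only [nsmul_eq_mul] using
    s.sum_le_card_nsmul _ _ fun i _ ↦ Int.le_sub_one_of_lt (Int.emod_lt_of_pos (d i) hp)

section OrderedRing

variable {R : Type*} [CommRing R] [LinearOrder R] [IsStrictOrderedRing R] {p c N D : R}

theorem quadratic_le_of_degree_bounds (hp : 0 ≤ p + 1)
    (hlower : p * (N + 2 * p - 2) + c * (p ^ 2 - 1) ≤ (p + 1) * D) (hupper : D ≤ N + p - 2) :
    p ^ 2 - p + 2 + c * (p ^ 2 - 1) ≤ N := by
  have hscaled : (p + 1) * D ≤ (p + 1) * (N + p - 2) := mul_le_mul_of_nonneg_left hupper hp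
  linear_combination hlower + hscaled

theorem three_mul_add_four_le_quadratic (hp : 2 ≤ p) (hc : 0 ≤ c) :
    3 * c + 4 ≤ p ^ 2 - p + 2 + c * (p ^ 2 - 1) := by
  have hconst : 4 ≤ p ^ 2 - p + 2 := by nlinarith
  have hcoeff : 3 ≤ p ^ 2 - 1 := by nlinarith
  have hlinear : c * 3 ≤ c * (p ^ 2 - 1) := mul_le_mul_of_nonneg_left hcoeff hc
  linear_combination hconst + hlinear

theorem two_mul_le_mul_of_three_mul_add_four_le (hc : 0 ≤ c) (hN : 3 * c + 4 ≤ N) :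
    2 * c ≤ (N - 2 * c - 1) * (N - 2 * c - 2) := by
  have hleft : 2 ≤ N - 2 * c - 1 := by linarith
  have hright : c ≤ N - 2 * c - 2 := by linarith
  exact mul_le_mul hleft hright hc (zero_le_two.trans hleft)

theorem two_mul_sub_three_le_of_residue_loss_le {ρ δ : R} (hp : 0 < p) (hρ : ρ ≤ c * (p - 1))
    (hδ : p * (δ + N + 1) = (p + 1) * (D - ρ))
    (hlower : p * (N + 2 * p - 2) + c * (p ^ 2 - 1) ≤ (p + 1) * D) :
    2 * p - 3 ≤ δ := by
  have hloss : (p + 1) * ρ ≤ (p + 1) * (c * (p - 1)) :=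
    mul_le_mul_of_nonneg_left hρ (by linarith)
  have hscaled : p * (N + 2 * p - 2) ≤ p * (δ + N + 1) := by
    linear_combination hlower + hloss - hδ
  linarith [le_of_mul_le_mul_left hscaled hp]

end OrderedRing

theorem stmt_11_general {ι : Type*} (s : Finset ι) (d : ι → ℤ) {p N δ : ℤ} (hp : 2 ≤ p)
    (hδ : p * (δ + N + 1) = (p + 1) * ∑ i ∈ s, (d i - d i % p))
    (hlower : p * (N + 2 * p - 2) + s.card * (p ^ 2 - 1) ≤ (p + 1) * ∑ i ∈ s, d i)
    (hupper : ∑ i ∈ s, d i ≤ N + p - 2) :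
    2 * (s.card : ℤ) ≤ N - s.card + 3 ∧
    (s.card : ℤ) ≤ N - s.card - 1 ∧
    (2 * (s.card : ℤ) ≤ (N - 2 * s.card - 1) * (N - 2 * s.card - 2) ∧
      2 * (s.card : ℤ) ≤ (N - 2 * s.card - 1) * (N - 2 * s.card)) ∧
    (2 * p - 3 ≤ δ ∧ p ≤ (δ + 3) / 2 ∧ 0 < δ) := by
  have hcard : (0 : ℤ) ≤ s.card := Int.natCast_nonneg _
  have hN : 3 * (s.card : ℤ) + 4 ≤ N :=
    (three_mul_add_four_le_quadratic hp hcard).trans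
      (quadratic_le_of_degree_bounds (by linarith) hlower hupper)
  have hminus := two_mul_le_mul_of_three_mul_add_four_le hcard hN
  have hplus : 2 * (s.card : ℤ) ≤ (N - 2 * s.card - 1) * (N - 2 * s.card) :=
    hminus.trans (mul_le_mul_of_nonneg_left (by linarith) (by linarith))
  rw [Finset.sum_sub_distrib] at hδ
  have hδ_lower : 2 * p - 3 ≤ δ :=
    two_mul_sub_three_le_of_residue_loss_le (by linarith)
      (sum_emod_le_card_mul s d (by linarith)) hδ hlower
  exact ⟨by linarith, by linarith, ⟨hminus, hplus⟩, hδ_lower, by lia, by linarith⟩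

/-- The complete numerical content of the proof of the main theorem.  Here
`r i` is the residue of `d i` modulo `p`, and `δ` is the integer
`((p + 1)/p)·Σᵢ (dᵢ − rᵢ) − N − 1`, characterized by
`p·(δ + N + 1) = (p + 1)·Σᵢ (dᵢ − rᵢ)`. -/
theorem stmt_11 (p c : ℕ) (hp : 2 ≤ p) (hc : 1 ≤ c) (N : ℤ)
    (d r : Fin c → ℕ) (hd : ∀ i, p ≤ d i) (hr : ∀ i, r i = d i % p)
    (δ : ℤ) (hδ : (p : ℤ) * (δ + N + 1) = ((p : ℤ) + 1) * ∑ i, ((d i : ℤ) - (r i : ℤ)))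
    (h1 : (p : ℤ) * (N + 2 * p - 2) + c * ((p : ℤ) ^ 2 - 1) ≤
      ((p : ℤ) + 1) * ∑ i, (d i : ℤ))
    (h2 : ∑ i, (d i : ℤ) ≤ N + p - 2) :
    2 * (c : ℤ) ≤ N - c + 3 ∧
    (c : ℤ) ≤ N - c - 1 ∧
    (2 * (c : ℤ) ≤ (N - 2 * c - 1) * (N - 2 * c - 2) ∧
      2 * (c : ℤ) ≤ (N - 2 * c - 1) * (N - 2 * c)) ∧
    (2 * (p : ℤ) - 3 ≤ δ ∧ (p : ℤ) ≤ (δ + 3) / 2 ∧ 0 < δ) := by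
  simpa using stmt_11_general Finset.univ (fun i ↦ (d i : ℤ)) (p := p) (by exact_mod_cast hp)
    (by simpa [hr] using hδ) (by simpa using h1) h2
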